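/- arXiv:1907.03333 — 7 statements merged into one kernel-verified Lean document; each statement's English description precedes it below -/
import Mathlib

section
/- For every real number x, the limit lim_{R→∞} ∫_{-R}^{R} e^{i(t³/3 + x t)} dt exists in ℂ; consequently the Airy function Ai(x) = (2π)^{-1} lim_{R→∞} ∫_{-R}^{R} e^{i(t³/3 + x t)} dt is well defined for all real x. -/
open Filter intervalIntegral

/-- For every real number `x`, the limit `lim_{R→∞} ∫_{-R}^{R} e^{i(t³/3 + x t)} dt`
exists in `ℂ`, so the Airy function `Ai(x) = (2π)⁻¹ · lim_{R→∞} ∫_{-R}^{R} e^{i(t³/3 + x t)} dt`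
is well defined for every real `x`. -/
theorem airy_limit_exists (x : ℝ) :
    ∃ l : ℂ, Filter.Tendsto
      (fun R : ℝ => ∫ t in (-R)..R, Complex.exp (Complex.I * ((t : ℂ)^3 / 3 + (x : ℂ) * t)))
      Filter.atTop (nhds l) := by
  set E : ℝ → ℂ := fun t => Complex.exp (Complex.I * ((t : ℂ)^3 / 3 + (x : ℂ) * t)) with hE
  have hEn : ∀ t, ‖E t‖ = 1 := by
    intro t
    have := Complex.norm_exp_I_mul_ofReal (t^3/3 + x*t)
    simpa [hE] using this
  have hEc : Continuous E := by fun_prop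
  have hEd : ∀ t, HasDerivAt E (E t * (Complex.I * ((t:ℂ)^2 + x))) t := by
    intro t
    have h0 : HasDerivAt (fun t : ℝ => (t : ℂ)) 1 t := Complex.ofRealCLM.hasDerivAt
    have h1 := ((((h0.pow 3).div_const 3).add (h0.const_mul (x:ℂ))).const_mul Complex.I).cexp
    refine HasDerivAt.congr_deriv (f := E) h1 ?_
    change E t * _ = _
    push_cast
    ring
  set u : ℝ → ℝ := fun t => (1 + t^2)⁻¹ with hu
  set u' : ℝ → ℝ := fun t => -(2*t) / (1 + t^2)^2 with hu'
  have hpos : ∀ t : ℝ, 0 < 1 + t^2 := fun t => by positivity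
  have hud : ∀ t, HasDerivAt u (u' t) t := by
    intro t
    have h1 : HasDerivAt (fun t : ℝ => 1 + t^2) (2*t) t := by
      simpa using (hasDerivAt_pow 2 t).const_add 1
    exact h1.inv (hpos t).ne'
  have huc : Continuous u := continuous_iff_continuousAt.2 fun t => (hud t).continuousAt
  have huc' : Continuous u' := by
    apply Continuous.div (by fun_prop) (by fun_prop)
    intro t; exact (pow_pos (hpos t) 2).ne'
  have hub : ∀ t, |u' t| ≤ u t := by
    intro t
    have h := hpos t
    simp only [hu, hu']
    rw [abs_div, abs_of_pos (pow_pos h 2), inv_eq_one_div, div_le_div_iff₀ (pow_pos h 2) h]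
    have : |-(2*t)| ≤ 1 + t^2 := by
      rw [abs_le]; constructor <;> nlinarith [sq_nonneg (t-1), sq_nonneg (t+1)]
    nlinarith
  set g : ℝ → ℂ := fun t => (Complex.I * (u' t : ℂ) - ((x:ℂ) - 1) * (u t : ℂ)) * E t with hg
  have hgc : Continuous g := by fun_prop
  have hun : ∀ t, 0 ≤ u t := fun t => (inv_pos.2 (hpos t)).le
  have hgi : MeasureTheory.Integrable g := by
    have h1 : MeasureTheory.Integrable (fun t => (1 + |x - 1|) * u t) :=
      (integrable_inv_one_add_sq).const_mul _
    refine h1.mono' hgc.aestronglyMeasurable (Eventually.of_forall fun t => ?_)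
    simp only [hg, norm_mul, hEn, mul_one]
    refine (norm_sub_le _ _).trans ?_
    have h2 : ‖(x:ℂ) - 1‖ = |x - 1| := by
      rw [← Real.norm_eq_abs, ← Complex.norm_real]; simp
    rw [norm_mul, norm_mul, h2, Complex.norm_I, Complex.norm_real, Complex.norm_real,
      Real.norm_eq_abs, Real.norm_eq_abs, abs_of_nonneg (hun t)]
    linarith [hub t]
  set F : ℝ → ℂ := fun t => -Complex.I * ((u t : ℂ) * E t) with hF
  have hFd : ∀ t, HasDerivAt F (E t - g t) t := by
    intro t
    have h1 := (((hud t).ofReal_comp).mul (hEd t)).const_mul (-Complex.I)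
    refine HasDerivAt.congr_deriv (f := F) h1 ?_
    have h3 : (u t : ℂ) * (1 + (t:ℂ)^2) = 1 := by
      have : u t * (1 + t^2) = 1 := inv_mul_cancel₀ (hpos t).ne'
      exact_mod_cast this
    change _ = E t - (Complex.I * (u' t : ℂ) - ((x:ℂ) - 1) * (u t : ℂ)) * E t
    linear_combination (E t) * h3 - (u t : ℂ) * E t * ((t:ℂ)^2 + x) * Complex.I_sq
  have hF0 : Tendsto u atTop (nhds 0) := by
    apply Tendsto.inv_tendsto_atTop
    exact tendsto_atTop_add_const_left _ _ (tendsto_pow_atTop (by norm_num))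
  have hFn : ∀ t, ‖F t‖ = u t := by
    intro t
    simp [hF, hEn, abs_of_nonneg (hun t)]
  have hFt : Tendsto F atTop (nhds 0) := by
    rw [tendsto_zero_iff_norm_tendsto_zero]; simpa only [hFn] using hF0
  have hFt' : Tendsto (fun R => F (-R)) atTop (nhds 0) := by
    rw [tendsto_zero_iff_norm_tendsto_zero]
    simp only [hFn]
    simpa [hu] using hF0
  have hI := MeasureTheory.intervalIntegral_tendsto_integral hgi tendsto_neg_atTop_atBot tendsto_id
  refine ⟨_, ((hFt.sub hFt').add hI).congr fun R => ?_⟩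
  have h := integral_eq_sub_of_hasDerivAt (a := -R) (b := R) (fun t _ => hFd t)
    ((hEc.sub hgc).intervalIntegrable _ _)
  rw [integral_sub (hEc.intervalIntegrable _ _) (hgc.intervalIntegrable _ _)] at h
  rw [← h]
  simp
end

section
/- For every real w > 0, with η = √w one has Ai(w) = (e^{-2η³/3}/(2π)) ∫_{-∞}^{∞} e^{-η u²} e^{i u³/3} du, where the integral is an absolutely convergent Lebesgue integral. -/
open Filter MeasureTheory Real

/-- The Airy function, defined for real `x` by
`Ai(x) = (2π)⁻¹ · lim_{R→∞} ∫_{-R}^{R} e^{i(t³/3 + x t)} dt`. -/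
noncomputable def Ai (x : ℝ) : ℂ :=
  ((2 * Real.pi : ℝ)⁻¹ : ℂ) * limUnder Filter.atTop
    (fun R : ℝ => ∫ t in (-R)..R, Complex.exp (Complex.I * ((t : ℂ)^3 / 3 + (x : ℂ) * t)))


lemma side_norm (w : ℝ) (R y : ℝ) : ‖Complex.exp (Complex.I * (((R:ℂ) + y * Complex.I)^3 / 3 + (w : ℂ) * ((R:ℂ) + y * Complex.I)))‖ = Real.exp (-(R^2*y) + (y^3/3 - w*y)) := by
  rw [Complex.norm_exp]
  congr 1
  have : Complex.I * (((R:ℂ) + y * Complex.I)^3 / 3 + (w : ℂ) * ((R:ℂ) + y * Complex.I))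
      = ((-(R^2*y) + (y^3/3 - w*y) : ℝ) : ℂ) + ((R^3/3 - R*y^2 + w*R : ℝ) : ℂ) * Complex.I := by
    push_cast
    linear_combination (Complex.I ^ 2 * (y:ℂ)^3/3 - (y:ℂ)^3/3 + (R:ℂ)^2*y + R*y^2*Complex.I + w * y) * Complex.I_sq
  rw [this]
  simp [-Complex.ofReal_add, -Complex.ofReal_sub, -Complex.ofReal_mul, -Complex.ofReal_neg]

lemma side_tendsto (w : ℝ) (hw : 0 < w) (g : ℝ → ℝ) (hg : ∀ R, g R ^ 2 = R ^ 2) :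
    Tendsto (fun R : ℝ => ∫ y in (0:ℝ)..(√w), Complex.exp (Complex.I * (((g R:ℂ) + y * Complex.I)^3 / 3 + (w : ℂ) * ((g R:ℂ) + y * Complex.I)))) atTop (nhds 0) := by
  have h0 : (0:ℂ) = ∫ y in (0:ℝ)..(√w), (0:ℂ) := by simp
  rw [h0]
  have key : ∀ y ∈ Set.uIoc 0 (√w), 0 < y ∧ y^3/3 - w*y ≤ 0 := by
    intro y hy
    rw [Set.uIoc_of_le (Real.sqrt_nonneg w)] at hy
    refine ⟨hy.1, ?_⟩
    have h1 : y^2 ≤ w := by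
      have := Real.sq_sqrt hw.le
      nlinarith [hy.1, hy.2]
    nlinarith [mul_le_mul_of_nonneg_left h1 hy.1.le, mul_pos hw hy.1]
  apply intervalIntegral.tendsto_integral_filter_of_dominated_convergence (fun _ => (1:ℝ))
  · refine Eventually.of_forall fun R => Continuous.aestronglyMeasurable (by fun_prop)
  · refine Eventually.of_forall fun R => Eventually.of_forall fun y hy => ?_
    obtain ⟨h1, h2⟩ := key y hy
    rw [side_norm, Real.exp_le_one_iff]
    nlinarith [mul_nonneg (sq_nonneg (g R)) h1.le]
  · simp
  · refine Eventually.of_forall fun y hy => ?_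
    obtain ⟨h1, h2⟩ := key y hy
    rw [tendsto_zero_iff_norm_tendsto_zero]
    simp_rw [side_norm, hg]
    apply Real.tendsto_exp_atBot.comp
    apply tendsto_atBot_add_const_right
    apply tendsto_neg_atTop_atBot.comp
    exact (tendsto_pow_atTop two_ne_zero).atTop_mul_const h1

/-- For every real `w > 0`, with `η = √w`,
`Ai(w) = (e^{-2η³/3}/(2π)) ∫_{-∞}^{∞} e^{-η u²} e^{i u³/3} du`,
the integral being absolutely convergent. -/
theorem airy_contour_formula (w : ℝ) (hw : 0 < w) :
    MeasureTheory.Integrable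
      (fun u : ℝ => Complex.exp (-(Real.sqrt w : ℂ) * (u : ℂ)^2) *
        Complex.exp (Complex.I * (u : ℂ)^3 / 3)) ∧
    Ai w = ((Real.exp (-(2 * (Real.sqrt w)^3 / 3)) / (2 * Real.pi) : ℝ) : ℂ) *
      ∫ u : ℝ, Complex.exp (-(Real.sqrt w : ℂ) * (u : ℂ)^2) *
        Complex.exp (Complex.I * (u : ℂ)^3 / 3) := by
  have hη : 0 < √w := Real.sqrt_pos.2 hw
  have hint : MeasureTheory.Integrable
      (fun u : ℝ => Complex.exp (-(Real.sqrt w : ℂ) * (u : ℂ)^2) *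
        Complex.exp (Complex.I * (u : ℂ)^3 / 3)) := by
    refine (integrable_exp_neg_mul_sq hη).mono' (Continuous.aestronglyMeasurable (by fun_prop))
      (Eventually.of_forall fun u => le_of_eq ?_)
    rw [norm_mul, Complex.norm_exp, Complex.norm_exp]
    have e1 : (-(Real.sqrt w : ℂ) * (u : ℂ)^2) = ((-√w * u^2 : ℝ) : ℂ) := by push_cast; ring
    have e2 : Complex.I * (u : ℂ)^3 / 3 = ((u^3/3 : ℝ) : ℂ) * Complex.I := by push_cast; ring
    rw [e1, e2, Complex.ofReal_re, Complex.re_ofReal_mul]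
    simp
  refine ⟨hint, ?_⟩
  have hcauchy : ∀ R : ℝ, ∫ t in (-R)..R, Complex.exp (Complex.I * ((t : ℂ)^3 / 3 + (w : ℂ) * t))
      = (Real.exp (-(2 * (Real.sqrt w)^3 / 3)) : ℂ) * (∫ u in (-R)..R,
        Complex.exp (-(Real.sqrt w : ℂ) * (u : ℂ)^2) * Complex.exp (Complex.I * (u : ℂ)^3 / 3))
      - Complex.I * (∫ y in (0:ℝ)..(√w), Complex.exp (Complex.I * (((R:ℂ) + y * Complex.I)^3 / 3 + (w : ℂ) * ((R:ℂ) + y * Complex.I))))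
      + Complex.I * (∫ y in (0:ℝ)..(√w), Complex.exp (Complex.I * ((((-R : ℝ):ℂ) + y * Complex.I)^3 / 3 + (w : ℂ) * (((-R : ℝ):ℂ) + y * Complex.I)))) := by
    intro R
    have h := Complex.integral_boundary_rect_eq_zero_of_differentiableOn
      (fun z => Complex.exp (Complex.I * (z^3 / 3 + (w : ℂ) * z))) ⟨-R, 0⟩ ⟨R, √w⟩
      (Differentiable.differentiableOn (by fun_prop))
    simp only [smul_eq_mul, Complex.ofReal_zero, zero_mul, add_zero] at h
    have h2 : ∀ x : ℝ, Complex.exp (Complex.I * (((x:ℂ) + (√w : ℝ) * Complex.I)^3 / 3 + (w : ℂ) * ((x:ℂ) + (√w : ℝ) * Complex.I)))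
       = (Real.exp (-(2 * (Real.sqrt w)^3 / 3)) : ℂ) * (Complex.exp (-(Real.sqrt w : ℂ) * (x : ℂ)^2) * Complex.exp (Complex.I * (x : ℂ)^3 / 3)) := by
      intro x
      rw [Complex.ofReal_exp, ← Complex.exp_add, ← Complex.exp_add]
      congr 1
      have hs : (w : ℂ) = (√w : ℂ)^2 := by exact_mod_cast (Real.sq_sqrt hw.le).symm
      rw [hs]
      push_cast
      generalize (√w : ℂ) = y
      linear_combination (Complex.I ^ 2 * (y:ℂ)^3/3 - (y:ℂ)^3/3 + (x:ℂ)^2*y + x*y^2*Complex.I + y^2 * y) * Complex.I_sq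
    simp_rw [h2] at h
    rw [intervalIntegral.integral_const_mul] at h
    linear_combination h
  have hlim := ((intervalIntegral_tendsto_integral hint tendsto_neg_atTop_atBot tendsto_id).const_mul
      (Real.exp (-(2 * (Real.sqrt w)^3 / 3)) : ℂ)).sub
      ((side_tendsto w hw (fun R => R) (fun _ => rfl)).const_mul Complex.I)
  have hlim2 := hlim.add ((side_tendsto w hw (fun R => -R) (fun R => neg_sq R)).const_mul Complex.I)
  simp only [mul_zero, sub_zero, add_zero, id] at hlim2
  simp_rw [← hcauchy] at hlim2
  rw [Ai, hlim2.limUnder_eq]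
  push_cast
  ring
end

section
/- The function J defined on the slit plane Ω = ℂ \ { i y : y ≤ 0 } by J(r e^{iθ}) = e^{-iθ/6} ∫_{-∞}^{∞} exp(-e^{-iθ/3} t²) cos( √(2 t⁶ r / 27) ) dt, for r > 0 and θ ∈ (-π/2, 3π/2), is well defined and holomorphic on Ω, and for every real η > 0 it satisfies J(3/(2η³)) = 2π √η e^{2η³/3} Ai(η²). -/
open Filter MeasureTheory Real

/-- The slit plane `Ω = ℂ \ { i y : y ≤ 0 }`. -/
def Ω : Set ℂ := {z : ℂ | ¬ ∃ y : ℝ, y ≤ 0 ∧ z = (y : ℂ) * Complex.I}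

/-- kernel function -/
noncomputable def FK (w : ℂ) : ℂ :=
  ∫ u : ℝ, Complex.exp (-w * (u : ℂ)^2) * ((Real.cos (Real.sqrt (2 * u^6 / 27)) : ℝ) : ℂ)

lemma norm_exp_sq (w : ℂ) (u : ℝ) : ‖Complex.exp (-w * (u : ℂ)^2)‖ = Real.exp (-w.re * u^2) := by
  rw [Complex.norm_exp]
  congr 1
  rw [← Complex.ofReal_pow, Complex.re_mul_ofReal, Complex.neg_re]

lemma FK_diff {w : ℂ} (hw : 0 < w.re) : DifferentiableAt ℂ FK w := by
  have hc : Continuous (fun u : ℝ => ((Real.cos (Real.sqrt (2 * u^6 / 27)) : ℝ) : ℂ)) := by fun_prop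
  have hcn : ∀ u : ℝ, ‖((Real.cos (Real.sqrt (2 * u^6 / 27)) : ℝ) : ℂ)‖ ≤ 1 := by
    intro u
    rw [Complex.norm_real]
    exact Real.abs_cos_le_one _
  have key := hasDerivAt_integral_of_dominated_loc_of_deriv_le (μ := (volume : Measure ℝ)) (𝕜 := ℂ)
    (F := fun (w : ℂ) (u : ℝ) => Complex.exp (-w * (u : ℂ)^2) * ((Real.cos (Real.sqrt (2 * u^6 / 27)) : ℝ) : ℂ))
    (F' := fun (w : ℂ) (u : ℝ) => (Complex.exp (-w * (u : ℂ)^2) * (-(u:ℂ)^2)) * ((Real.cos (Real.sqrt (2 * u^6 / 27)) : ℝ) : ℂ))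
    (x₀ := w) (s := Metric.ball w (w.re/2))
    (bound := fun u : ℝ => u^2 * Real.exp (-(w.re/2) * u^2))
    (Metric.ball_mem_nhds _ (by linarith))
    (Filter.Eventually.of_forall fun w => by
      apply Continuous.aestronglyMeasurable; fun_prop)
    (by
      refine (integrable_exp_neg_mul_sq hw).mono' (by apply Continuous.aestronglyMeasurable; fun_prop) ?_
      refine Filter.Eventually.of_forall fun u => ?_
      rw [norm_mul, norm_exp_sq]
      exact mul_le_of_le_one_right (Real.exp_pos _).le (hcn u))
    (by apply Continuous.aestronglyMeasurable; fun_prop)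
    (by
      refine Filter.Eventually.of_forall fun u x hx => ?_
      rw [norm_mul, norm_mul, norm_exp_sq]
      refine (mul_le_of_le_one_right (by positivity) (hcn u)).trans ?_
      have h1 : ‖-(u:ℂ)^2‖ = u^2 := by simp
      rw [h1, mul_comm]
      have h2 : w.re/2 ≤ x.re := by
        have h3 : |(x - w).re| ≤ ‖x - w‖ := Complex.abs_re_le_norm _
        rw [Metric.mem_ball, dist_eq_norm] at hx
        have := (abs_le.1 h3).1
        simp only [Complex.sub_re] at this
        linarith
      gcongr)
    (by
      have := integrable_rpow_mul_exp_neg_mul_sq (b := w.re/2) (by linarith) (s := 2) (by norm_num)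
      simpa using this)
    (by
      refine Filter.Eventually.of_forall fun u x hx => ?_
      refine HasDerivAt.mul_const ?_ _
      refine HasDerivAt.cexp ?_
      simpa using ((hasDerivAt_id x).neg.mul_const ((u:ℂ)^2)))
  exact key.2.differentiableAt

/-- log branch -/
noncomputable def LB (z : ℂ) : ℂ := Complex.log (-Complex.I * z) + Real.pi / 2 * Complex.I

lemma LB_polar {r θ : ℝ} (hr : 0 < r) (h : θ ∈ Set.Ioo (-(Real.pi/2)) (3*Real.pi/2)) :
    LB ((r : ℂ) * Complex.exp (Complex.I * θ)) = Real.log r + θ * Complex.I := by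
  have e : -Complex.I * ((r : ℂ) * Complex.exp (Complex.I * θ)) =
      Complex.exp ((Real.log r : ℝ) + ((θ - Real.pi/2 : ℝ) : ℂ) * Complex.I) := by
    rw [Complex.exp_add, ← Complex.ofReal_exp, Real.exp_log hr]
    push_cast
    rw [sub_mul, sub_eq_add_neg, Complex.exp_add, ← neg_mul, ← neg_div, Complex.exp_neg_pi_div_two_mul_I,
      mul_comm (θ:ℂ)]
    ring
  rw [LB, e, Complex.log_exp]
  · push_cast; ring
  · simp; linarith [h.1]
  · simp; linarith [h.2]

lemma mem_slit {z : ℂ} (hz : z ∈ Ω) : -Complex.I * z ∈ Complex.slitPlane := by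
  rw [Complex.mem_slitPlane_iff]
  by_contra hcon
  push Not at hcon
  simp at hcon
  exact hz ⟨z.im, hcon.1, by apply Complex.ext <;> simp [hcon.2]⟩

lemma LB_diff {z : ℂ} (hz : z ∈ Ω) : DifferentiableAt ℂ LB z := by
  unfold LB
  exact ((differentiableAt_id.const_mul _).clog (mem_slit hz)).add_const _

lemma LB_re {z : ℂ} (hz : z ∈ Ω) : 0 < (Complex.exp (-LB z / 3)).re := by
  have h1 := Complex.neg_pi_lt_arg (-Complex.I * z)
  have h2 : (-Complex.I * z).arg < Real.pi :=
    lt_of_le_of_ne (Complex.arg_le_pi _) (Complex.mem_slitPlane_iff_arg.1 (mem_slit hz)).1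
  have him : (-LB z / 3).im = -((-Complex.I * z).arg + Real.pi/2)/3 := by
    have : (-LB z / 3) = ((1/3 : ℝ) : ℂ) * (-LB z) := by push_cast; ring
    rw [this, Complex.im_ofReal_mul]
    have h5 : (Real.pi / 2 * Complex.I : ℂ) = ((Real.pi/2 : ℝ) : ℂ) * Complex.I := by push_cast; ring
    rw [LB, h5, Complex.neg_im, Complex.add_im, Complex.log_im, Complex.im_ofReal_mul, Complex.I_im]
    ring
  rw [Complex.exp_re, him]
  refine mul_pos (Real.exp_pos _) (Real.cos_pos_of_mem_Ioo ⟨?_, ?_⟩) <;> linarith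

/-- the function -/
noncomputable def JJ (z : ℂ) : ℂ := Complex.exp (-LB z / 6) * FK (Complex.exp (-LB z / 3))

lemma JJ_diff : DifferentiableOn ℂ JJ Ω := by
  intro z hz
  apply DifferentiableAt.differentiableWithinAt
  have h := LB_diff hz
  have h3 : DifferentiableAt ℂ (fun z => Complex.exp (-LB z / 3)) z := by fun_prop
  have h4 : DifferentiableAt ℂ (fun z => FK (Complex.exp (-LB z / 3))) z :=
    DifferentiableAt.comp (g := FK) (f := fun z => Complex.exp (-LB z / 3)) z (FK_diff (LB_re hz)) h3
  have h6 : DifferentiableAt ℂ (fun z => Complex.exp (-LB z / 6)) z := by fun_prop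
  exact h6.mul h4

lemma JJ_polar (r θ : ℝ) (hr : 0 < r) (h : θ ∈ Set.Ioo (-(Real.pi/2)) (3*Real.pi/2)) :
    JJ ((r : ℂ) * Complex.exp (Complex.I * θ)) =
          Complex.exp (-(Complex.I * θ) / 6) *
            ∫ t : ℝ, Complex.exp (-(Complex.exp (-(Complex.I * θ) / 3)) * (t : ℂ)^2) *
              ((Real.cos (Real.sqrt (2 * t^6 * r / 27)) : ℝ) : ℂ) := by
  set a : ℝ := Real.exp (-(Real.log r) / 6) with ha
  have hapos : 0 < a := Real.exp_pos _
  have ha6 : a^6 * r = 1 := by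
    rw [ha, ← Real.exp_nat_mul]
    nth_rewrite 2 [← Real.exp_log hr]
    rw [← Real.exp_add]
    norm_num; ring
  have hcv := Measure.integral_comp_mul_left (fun t : ℝ => Complex.exp (-(Complex.exp (-(Complex.I * θ) / 3)) * (t : ℂ)^2) *
              ((Real.cos (Real.sqrt (2 * t^6 * r / 27)) : ℝ) : ℂ)) a
  rw [JJ, LB_polar hr h, FK]
  have e1 : Complex.exp (-((Real.log r : ℂ) + θ * Complex.I) / 6) = a * Complex.exp (-(Complex.I * θ) / 6) := by
    rw [ha, Complex.ofReal_exp, ← Complex.exp_add]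
    congr 1; push_cast; ring
  have e2 : Complex.exp (-((Real.log r : ℂ) + θ * Complex.I) / 3) = a^2 * Complex.exp (-(Complex.I * θ) / 3) := by
    rw [ha, Complex.ofReal_exp, ← Complex.exp_nat_mul, ← Complex.exp_add]
    congr 1; push_cast; ring
  rw [e1, e2]
  have e3 : ∀ u : ℝ, Complex.exp (-(a^2 * Complex.exp (-(Complex.I * θ) / 3)) * (u : ℂ)^2) *
      ((Real.cos (Real.sqrt (2 * u^6 / 27)) : ℝ) : ℂ) =
      Complex.exp (-(Complex.exp (-(Complex.I * θ) / 3)) * ((a * u : ℝ) : ℂ)^2) *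
              ((Real.cos (Real.sqrt (2 * (a * u)^6 * r / 27)) : ℝ) : ℂ) := by
    intro u
    have : 2 * (a * u)^6 * r / 27 = 2 * u^6 / 27 := by
      linear_combination (2 * u^6/27) * ha6
    rw [this]
    congr 2; push_cast; ring
  simp_rw [e3]
  rw [hcv, abs_of_pos (inv_pos.2 hapos), Complex.real_smul]
  have : (a : ℂ) ≠ 0 := by exact_mod_cast hapos.ne'
  generalize (∫ y : ℝ, Complex.exp (-(Complex.exp (-(Complex.I * θ) / 3)) * (y : ℂ)^2) *
              ((Real.cos (Real.sqrt (2 * y^6 * r / 27)) : ℝ) : ℂ)) = X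
  push_cast
  field_simp

/-- Airy phase -/
noncomputable def AP (η : ℝ) (t : ℂ) : ℂ := Complex.exp (Complex.I * (t^3 / 3 + ((η^2 : ℝ) : ℂ) * t))

lemma AP_shift (η s : ℝ) : AP η (s + η * Complex.I) =
    (Real.exp (-(2 * η^3 / 3)) : ℝ) * (Complex.exp (-η * (s:ℂ)^2) * Complex.exp (((s^3/3 : ℝ) : ℂ) * Complex.I)) := by
  rw [AP, Complex.ofReal_exp, ← Complex.exp_add, ← Complex.exp_add]
  congr 1
  push_cast
  linear_combination (s^2 * η + s * η^2 * Complex.I + η^3 * Complex.I^2 / 3 - (η:ℂ)^3/3 + η^3) * Complex.I_sq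

lemma AP_norm (η x y : ℝ) : ‖AP η (x + y * Complex.I)‖ = Real.exp (-(x^2 * y - y^3/3 + η^2 * y)) := by
  rw [AP, Complex.norm_exp]
  congr 1
  have : Complex.I * (((x:ℂ) + y * Complex.I)^3 / 3 + ((η^2 : ℝ) : ℂ) * (x + y * Complex.I)) =
      ((-(x^2 * y - y^3/3 + η^2 * y) : ℝ) : ℂ) + ((x^3/3 - x*y^2 + η^2*x : ℝ) : ℂ) * Complex.I := by
    push_cast
    linear_combination (x^2 * y + x * y^2 * Complex.I + y^3 * Complex.I^2 / 3 - (y:ℂ)^3/3 + η^2 * y) * Complex.I_sq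
  rw [this]
  rw [Complex.add_re, Complex.re_ofReal_mul, Complex.I_re, Complex.ofReal_re]; ring

lemma AP_side (η : ℝ) (hη : 0 < η) (ε : ℝ) (hε : ε^2 = 1) :
    Tendsto (fun R : ℝ => ∫ y in (0:ℝ)..η, AP η (((ε * R : ℝ) : ℂ) + y * Complex.I)) atTop (nhds 0) := by
  have := intervalIntegral.tendsto_integral_filter_of_dominated_convergence (μ := volume) (a := 0) (b := η)
    (l := atTop) (F := fun (R : ℝ) (y : ℝ) => AP η (((ε * R : ℝ) : ℂ) + y * Complex.I))
    (f := fun _ => (0:ℂ)) (fun _ => (1:ℝ))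
    (Filter.Eventually.of_forall fun R => by
      apply Continuous.aestronglyMeasurable; unfold AP; fun_prop)
    (Filter.Eventually.of_forall fun R => Filter.Eventually.of_forall fun y hy => by
      rw [Set.uIoc_of_le hη.le] at hy
      rw [AP_norm, Real.exp_le_one_iff]
      have h1 : y^2 ≤ η^2 := pow_le_pow_left₀ hy.1.le hy.2 2
      have h2 := mul_nonneg hy.1.le (sub_nonneg.2 h1)
      have h3 := mul_nonneg (sq_nonneg (ε * R)) hy.1.le
      have h4 := pow_pos hy.1 3
      nlinarith)
    (by simp)
    (Filter.Eventually.of_forall fun y hy => by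
      rw [Set.uIoc_of_le hη.le] at hy
      rw [tendsto_zero_iff_norm_tendsto_zero]
      simp_rw [AP_norm]
      apply Real.tendsto_exp_neg_atTop_nhds_zero.comp
      have : (fun R : ℝ => (ε * R)^2 * y - y^3/3 + η^2 * y) = fun R : ℝ => R^2 * y + (- y^3/3 + η^2 * y) := by
        funext R
        linear_combination (R^2 * y) * hε
      rw [this]
      exact tendsto_atTop_add_const_right _ _ ((tendsto_pow_atTop (by norm_num)).atTop_mul_const hy.1))
  simpa using this

lemma int_G (η : ℝ) (hη : 0 < η) : Integrable (fun s : ℝ => Complex.exp (-η * (s:ℂ)^2) * Complex.exp (((s^3/3 : ℝ) : ℂ) * Complex.I)) := by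
  refine (integrable_exp_neg_mul_sq hη).mono' (by apply Continuous.aestronglyMeasurable; fun_prop) ?_
  refine Filter.Eventually.of_forall fun u => ?_
  rw [norm_mul, norm_exp_sq, Complex.norm_exp_ofReal_mul_I]
  simp

lemma AP_lim (η : ℝ) (hη : 0 < η) :
    Tendsto (fun R : ℝ => ∫ t in (-R)..R, AP η t) atTop
      (nhds ((Real.exp (-(2 * η^3 / 3)) : ℝ) * ∫ s : ℝ, Complex.exp (-η * (s:ℂ)^2) * Complex.exp (((s^3/3 : ℝ) : ℂ) * Complex.I))) := by
  have hrect : ∀ R : ℝ, ∫ t in (-R)..R, AP η t =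
      (∫ t in (-R)..R, AP η (t + η * Complex.I)) -
      Complex.I * (∫ y in (0:ℝ)..η, AP η (((1 * R : ℝ) : ℂ) + y * Complex.I)) +
      Complex.I * (∫ y in (0:ℝ)..η, AP η (((-1 * R : ℝ) : ℂ) + y * Complex.I)) := by
    intro R
    have hd : Differentiable ℂ (AP η) := by unfold AP; fun_prop
    have := Complex.integral_boundary_rect_eq_zero_of_differentiableOn (AP η) (((-R : ℝ):ℂ)) ((R:ℂ) + η * Complex.I)
      hd.differentiableOn
    simp at this
    simp
    linear_combination this
  simp_rw [hrect]
  have t1 := (AP_side η hη 1 (by norm_num)).const_mul Complex.I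
  have t2 := (AP_side η hη (-1) (by norm_num)).const_mul Complex.I
  have t3 : Tendsto (fun R : ℝ => ∫ t in (-R)..R, AP η (t + η * Complex.I)) atTop
      (nhds ((Real.exp (-(2 * η^3 / 3)) : ℝ) * ∫ s : ℝ, Complex.exp (-η * (s:ℂ)^2) * Complex.exp (((s^3/3 : ℝ) : ℂ) * Complex.I))) := by
    simp_rw [AP_shift, intervalIntegral.integral_const_mul]
    exact (intervalIntegral_tendsto_integral (int_G η hη) tendsto_neg_atTop_atBot tendsto_id).const_mul _
  simpa using (t3.sub t1).add t2

lemma G_cos (η : ℝ) (hη : 0 < η) :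
    ∫ s : ℝ, Complex.exp (-η * (s:ℂ)^2) * Complex.exp (((s^3/3 : ℝ) : ℂ) * Complex.I) =
    ∫ s : ℝ, Complex.exp (-η * (s:ℂ)^2) * ((Real.cos (s^3/3) : ℝ) : ℂ) := by
  have hi := int_G η hη
  have hn := integral_neg_eq_self (fun s : ℝ => Complex.exp (-η * (s:ℂ)^2) * Complex.exp (((s^3/3 : ℝ) : ℂ) * Complex.I)) volume
  have hadd := integral_add hi hi.comp_neg
  rw [hn, ← two_mul] at hadd
  have h2 : ∀ s : ℝ, Complex.exp (-η * (s:ℂ)^2) * ((Real.cos (s^3/3) : ℝ) : ℂ) = (1/2 : ℂ) *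
     (Complex.exp (-η * (s:ℂ)^2) * Complex.exp (((s^3/3 : ℝ) : ℂ) * Complex.I) +
      Complex.exp (-η * ((-s : ℝ):ℂ)^2) * Complex.exp ((((-s)^3/3 : ℝ) : ℂ) * Complex.I)) := by
    intro s
    have : (-s)^3/3 = -(s^3/3) := by ring
    rw [this, Complex.ofReal_cos, Complex.cos]
    push_cast
    ring_nf
  simp_rw [h2]
  rw [integral_const_mul, hadd]
  ring

lemma JJ_eta (η : ℝ) (hη : 0 < η) :
    JJ ((3 / (2 * η^3) : ℝ)) =
          ((2 * Real.pi * Real.sqrt η * Real.exp (2 * η^3 / 3) : ℝ) : ℂ) * Ai (η^2) := by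
  have h0 := JJ_polar (3 / (2 * η^3)) 0 (by positivity) ⟨by linarith [Real.pi_pos], by linarith [Real.pi_pos]⟩
  simp only [Complex.ofReal_zero, mul_zero, neg_zero, zero_div, Complex.exp_zero, mul_one, one_mul] at h0
  rw [h0]
  have hlim := (AP_lim η hη).limUnder_eq
  unfold AP at hlim
  rw [Ai, hlim, G_cos η hη]
  have hs : 0 < Real.sqrt η := Real.sqrt_pos.2 hη
  have hsq : Real.sqrt η ^ 2 = η := Real.sq_sqrt hη.le
  have hcv := Measure.integral_comp_mul_left (fun t : ℝ => Complex.exp (-1 * (t : ℂ)^2) *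
              ((Real.cos (Real.sqrt (2 * t^6 * (3 / (2 * η^3)) / 27)) : ℝ) : ℂ)) (Real.sqrt η)
  have e3 : ∀ s : ℝ, Complex.exp (-1 * ((Real.sqrt η * s : ℝ) : ℂ)^2) *
              ((Real.cos (Real.sqrt (2 * (Real.sqrt η * s)^6 * (3 / (2 * η^3)) / 27)) : ℝ) : ℂ) =
      Complex.exp (-η * (s:ℂ)^2) * ((Real.cos (s^3/3) : ℝ) : ℂ) := by
    intro s
    have h6 : Real.sqrt η ^ 6 = η^3 := by rw [← hsq]; ring_nf; rw [Real.sqrt_sq hs.le]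
    have : 2 * (Real.sqrt η * s)^6 * (3 / (2 * η^3)) / 27 = (s^3/3)^2 := by
      rw [mul_pow, h6]; field_simp; norm_num
    rw [this, Real.sqrt_sq_eq_abs, Real.cos_abs]
    congr 2
    rw [← Complex.ofReal_pow, mul_pow, hsq]; push_cast; ring
  simp_rw [e3] at hcv
  rw [hcv, abs_of_pos (inv_pos.2 hs), Complex.real_smul]
  have c1 : (Real.sqrt η : ℂ) ≠ 0 := by exact_mod_cast hs.ne'
  have c2 : (Real.pi : ℂ) ≠ 0 := by exact_mod_cast Real.pi_ne_zero
  have c3 : ((Real.exp (2 * η^3 / 3) : ℝ) : ℂ) ≠ 0 := by exact_mod_cast (Real.exp_pos _).ne'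
  rw [Real.exp_neg]
  generalize (∫ t : ℝ, Complex.exp (-1 * (t : ℂ)^2) *
              ((Real.cos (Real.sqrt (2 * t^6 * (3 / (2 * η^3)) / 27)) : ℝ) : ℂ)) = X
  simp only [Complex.ofReal_mul, Complex.ofReal_inv, Complex.ofReal_ofNat]
  field_simp

/-- There is a well-defined holomorphic function `J` on the slit plane
`Ω = ℂ \ { i y : y ≤ 0 }` satisfying
`J(r e^{iθ}) = e^{-iθ/6} ∫_{-∞}^{∞} exp(-e^{-iθ/3} t²) cos(√(2 t⁶ r / 27)) dt`
for all `r > 0`, `θ ∈ (-π/2, 3π/2)`, and such that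
`J(3/(2η³)) = 2π √η e^{2η³/3} Ai(η²)` for every real `η > 0`. -/
theorem exists_J_holomorphic :
    ∃ J : ℂ → ℂ, DifferentiableOn ℂ J Ω ∧
      (∀ r θ : ℝ, 0 < r → θ ∈ Set.Ioo (-(Real.pi/2)) (3*Real.pi/2) →
        J ((r : ℂ) * Complex.exp (Complex.I * θ)) =
          Complex.exp (-(Complex.I * θ) / 6) *
            ∫ t : ℝ, Complex.exp (-(Complex.exp (-(Complex.I * θ) / 3)) * (t : ℂ)^2) *
              ((Real.cos (Real.sqrt (2 * t^6 * r / 27)) : ℝ) : ℂ)) ∧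
      (∀ η : ℝ, 0 < η →
        J ((3 / (2 * η^3) : ℝ)) =
          ((2 * Real.pi * Real.sqrt η * Real.exp (2 * η^3 / 3) : ℝ) : ℂ) * Ai (η^2)) := by
  exact ⟨JJ, JJ_diff, JJ_polar, JJ_eta⟩
end

section
/- The Airy function satisfies the classical asymptotics on the positive real axis: lim_{w→+∞} 2√π · w^{1/4} · e^{2 w^{3/2}/3} · Ai(w) = 1. -/
open Filter MeasureTheory Real

/-- Exponent of the Airy integrand. -/
noncomputable def airyF (s : ℝ) (z : ℂ) : ℂ :=
  Complex.exp (Complex.I * (z ^ 3 / 3 + ((s ^ 2 : ℝ) : ℂ) * z))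

/-- Shifted integrand. -/
noncomputable def airyG (s : ℝ) (t : ℝ) : ℂ :=
  Complex.exp (((-s * t ^ 2 : ℝ) : ℂ) + ((t ^ 3 / 3 : ℝ) : ℂ) * Complex.I)

lemma airyF_shift (s t : ℝ) :
    airyF s ((t : ℂ) + (s : ℂ) * Complex.I) = ((Real.exp (-(2 * s ^ 3 / 3)) : ℝ) : ℂ) * airyG s t := by
  unfold airyF airyG
  rw [Complex.ofReal_exp, ← Complex.exp_add]
  congr 1
  push_cast
  have h2 : Complex.I ^ 2 = -1 := Complex.I_sq
  have h3 : Complex.I ^ 3 = -Complex.I := Complex.I_pow_three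
  have h4 : Complex.I ^ 4 = 1 := Complex.I_pow_four
  ring_nf
  rw [h2, h3, h4]
  ring

lemma airyG_norm (s t : ℝ) : ‖airyG s t‖ = Real.exp (-s * t ^ 2) := by
  unfold airyG
  rw [Complex.norm_exp]
  congr 1
  rw [Complex.add_re, Complex.re_ofReal_mul, Complex.ofReal_re]
  simp

lemma airyG_cont (s : ℝ) : Continuous (airyG s) := by
  unfold airyG; fun_prop

lemma airyG_int (s : ℝ) (hs : 0 < s) : Integrable (airyG s) := by
  refine (integrable_exp_neg_mul_sq hs).mono' (airyG_cont s).aestronglyMeasurable ?_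
  exact Filter.Eventually.of_forall fun t => (airyG_norm s t).le

lemma airyF_norm (s r y : ℝ) (hy : 0 ≤ y) (hys : y ≤ s) :
    ‖airyF s ((r : ℂ) + (y : ℂ) * Complex.I)‖ ≤ Real.exp (-(r ^ 2) * y) := by
  unfold airyF
  rw [Complex.norm_exp]
  apply Real.exp_le_exp.mpr
  have : Complex.I * (((r : ℂ) + (y : ℂ) * Complex.I) ^ 3 / 3
      + ((s ^ 2 : ℝ) : ℂ) * ((r : ℂ) + (y : ℂ) * Complex.I))
      = ((-(r ^ 2 * y - y ^ 3 / 3 + s ^ 2 * y) : ℝ) : ℂ)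
        + ((r ^ 3 / 3 - r * y ^ 2 + s ^ 2 * r : ℝ) : ℂ) * Complex.I := by
    push_cast
    have h2 : Complex.I ^ 2 = -1 := Complex.I_sq
    have h3 : Complex.I ^ 3 = -Complex.I := Complex.I_pow_three
    have h4 : Complex.I ^ 4 = 1 := Complex.I_pow_four
    ring_nf
    rw [h2, h3, h4]
    ring
  rw [this, Complex.add_re, Complex.re_ofReal_mul, Complex.ofReal_re, Complex.I_re]
  have h1 : y ^ 2 ≤ s ^ 2 := by gcongr
  nlinarith [mul_le_mul_of_nonneg_right h1 hy, mul_nonneg (sq_nonneg y) hy]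

lemma airy_side (s : ℝ) (hs : 0 < s) (r : ℝ) (hr : r ≠ 0) :
    ‖∫ y in (0 : ℝ)..s, airyF s ((r : ℂ) + (y : ℂ) * Complex.I)‖ ≤ (r ^ 2)⁻¹ := by
  have hr2 : 0 < r ^ 2 := by positivity
  have h1 : ‖∫ y in (0 : ℝ)..s, airyF s ((r : ℂ) + (y : ℂ) * Complex.I)‖
      ≤ ∫ y in (0 : ℝ)..s, Real.exp (-(r ^ 2) * y) := by
    apply intervalIntegral.norm_integral_le_of_norm_le hs.le
    · exact Filter.Eventually.of_forall fun y hy => airyF_norm s r y hy.1.le hy.2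
    · exact Continuous.intervalIntegrable (by fun_prop) _ _
  refine h1.trans ?_
  rw [intervalIntegral.integral_comp_mul_left (fun x => Real.exp x) (neg_ne_zero.mpr hr2.ne'),
    integral_exp, smul_eq_mul, inv_neg, mul_zero, Real.exp_zero]
  have : 0 < Real.exp (-r ^ 2 * s) := Real.exp_pos _
  have h3 : 0 < (r ^ 2)⁻¹ := by positivity
  nlinarith

lemma airy_rect (s R : ℝ) :
    (∫ t in (-R)..R, airyF s (t : ℂ)) =
      ((Real.exp (-(2 * s ^ 3 / 3)) : ℝ) : ℂ) * (∫ t in (-R)..R, airyG s t)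
      - Complex.I * (∫ y in (0 : ℝ)..s, airyF s ((R : ℂ) + (y : ℂ) * Complex.I))
      + Complex.I * (∫ y in (0 : ℝ)..s, airyF s (((-R : ℝ) : ℂ) + (y : ℂ) * Complex.I)) := by
  have hd : Differentiable ℂ (airyF s) := by unfold airyF; fun_prop
  have h := Complex.integral_boundary_rect_eq_zero_of_differentiableOn (airyF s)
    ((-R : ℝ) : ℂ) (⟨R, s⟩ : ℂ) hd.differentiableOn
  simp only [Complex.ofReal_re, Complex.ofReal_im, Complex.ofReal_zero, zero_mul, add_zero,
    smul_eq_mul, airyF_shift, intervalIntegral.integral_const_mul] at h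
  linear_combination h

lemma airy_lim (s : ℝ) (hs : 0 < s) :
    Tendsto (fun R : ℝ => ∫ t in (-R)..R, airyF s (t : ℂ)) atTop
      (nhds (((Real.exp (-(2 * s ^ 3 / 3)) : ℝ) : ℂ) * ∫ t, airyG s t)) := by
  simp_rw [airy_rect]
  have h1 : Tendsto (fun R : ℝ => ∫ t in (-R)..R, airyG s t) atTop (nhds (∫ t, airyG s t)) :=
    intervalIntegral_tendsto_integral (airyG_int s hs) tendsto_neg_atTop_atBot tendsto_id
  have h0 : Tendsto (fun R : ℝ => (R ^ 2)⁻¹) atTop (nhds 0) :=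
    (tendsto_pow_atTop two_ne_zero).inv_tendsto_atTop
  have h2 : Tendsto (fun R : ℝ => ∫ y in (0 : ℝ)..s, airyF s ((R : ℂ) + (y : ℂ) * Complex.I))
      atTop (nhds 0) := by
    refine squeeze_zero_norm' ?_ h0
    filter_upwards [eventually_gt_atTop 0] with R hR using airy_side s hs R hR.ne'
  have h3 : Tendsto (fun R : ℝ => ∫ y in (0 : ℝ)..s,
      airyF s (((-R : ℝ) : ℂ) + (y : ℂ) * Complex.I)) atTop (nhds 0) := by
    refine squeeze_zero_norm' ?_ h0
    filter_upwards [eventually_gt_atTop 0] with R hR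
    have := airy_side s hs (-R) (neg_ne_zero.mpr hR.ne')
    rwa [neg_sq] at this
  simpa using ((h1.const_mul _).sub (h2.const_mul Complex.I)).add (h3.const_mul Complex.I)

/-- Rescaled integrand. -/
noncomputable def airyH (e : ℝ) (u : ℝ) : ℂ :=
  Complex.exp (((-1 * u ^ 2 : ℝ) : ℂ) + ((e * u ^ 3 / 3 : ℝ) : ℂ) * Complex.I)

lemma airyH_norm (e t : ℝ) : ‖airyH e t‖ = Real.exp (-1 * t ^ 2) := by
  unfold airyH
  rw [Complex.norm_exp]
  congr 1
  rw [Complex.add_re, Complex.re_ofReal_mul, Complex.ofReal_re]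
  simp

lemma airyH_lim : Tendsto (fun e : ℝ => ∫ u, airyH e u) (nhds 0)
    (nhds ((Real.sqrt Real.pi : ℝ) : ℂ)) := by
  have h0 : ∫ u, airyH 0 u = ((Real.sqrt Real.pi : ℝ) : ℂ) := by
    have h := integral_gaussian 1
    rw [div_one] at h
    rw [← h, ← integral_complex_ofReal]
    congr 1
    ext u
    simp [airyH]
  rw [← h0]
  refine tendsto_integral_filter_of_dominated_convergence (fun u => Real.exp (-1 * u ^ 2))
    ?_ ?_ (integrable_exp_neg_mul_sq one_pos) ?_
  · refine Filter.Eventually.of_forall fun e => Continuous.aestronglyMeasurable ?_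
    unfold airyH; fun_prop
  · exact Filter.Eventually.of_forall fun e => Filter.Eventually.of_forall fun u =>
      (airyH_norm e u).le
  · refine Filter.Eventually.of_forall fun u => Continuous.tendsto (f := fun e => airyH e u) ?_ 0
    unfold airyH; fun_prop

/-- Scaling with `q = w^{1/4}`, `s = q²`. -/
lemma airyG_scale (q : ℝ) (hq : 0 < q) :
    (q : ℂ) * ∫ t, airyG (q ^ 2) t = ∫ u, airyH ((q ^ 3)⁻¹) u := by
  have h := Measure.integral_comp_mul_left (fun u => airyH ((q ^ 3)⁻¹) u) q
  have h2 : (fun x => airyH ((q ^ 3)⁻¹) (q * x)) = airyG (q ^ 2) := by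
    ext x
    unfold airyH airyG
    have e1 : -1 * (q * x) ^ 2 = -q ^ 2 * x ^ 2 := by ring
    have e2 : (q ^ 3)⁻¹ * (q * x) ^ 3 / 3 = x ^ 3 / 3 := by field_simp
    rw [e1, e2]
  rw [h2] at h
  rw [h, abs_of_pos (inv_pos.mpr hq), Complex.real_smul, ← mul_assoc, ← Complex.ofReal_mul,
    mul_inv_cancel₀ hq.ne', Complex.ofReal_one, one_mul]

lemma Ai_eq (q : ℝ) (hq : 0 < q) :
    Ai (q ^ 4) = ((2 * Real.pi : ℝ) : ℂ)⁻¹ *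
      (((Real.exp (-(2 * q ^ 6 / 3)) : ℝ) : ℂ) * ∫ t, airyG (q ^ 2) t) := by
  unfold Ai
  congr 1
  apply Tendsto.limUnder_eq
  have h := airy_lim (q ^ 2) (by positivity)
  unfold airyF at h
  rwa [← pow_mul, ← pow_mul] at h

theorem airy_asymptotics :
    Filter.Tendsto
      (fun w : ℝ =>
        ((2 * Real.sqrt Real.pi * w ^ ((1:ℝ)/4) * Real.exp (2 * w ^ ((3:ℝ)/2) / 3) : ℝ) : ℂ)
          * Ai w)
      Filter.atTop (nhds 1) := by
  have hq : Tendsto (fun w : ℝ => w ^ ((1:ℝ)/4)) atTop atTop :=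
    tendsto_rpow_atTop (by norm_num)
  have he : Tendsto (fun w : ℝ => ((w ^ ((1:ℝ)/4)) ^ 3)⁻¹) atTop (nhds 0) :=
    ((tendsto_pow_atTop three_ne_zero).comp hq).inv_tendsto_atTop
  have hpi : ((Real.sqrt Real.pi : ℝ) : ℂ)⁻¹ * ((Real.sqrt Real.pi : ℝ) : ℂ) = 1 :=
    inv_mul_cancel₀ (by
      rw [Ne, Complex.ofReal_eq_zero]
      exact (Real.sqrt_pos.mpr Real.pi_pos).ne')
  have hl := (airyH_lim.comp he).const_mul (((Real.sqrt Real.pi : ℝ) : ℂ)⁻¹)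
  rw [hpi] at hl
  refine hl.congr' ?_
  filter_upwards [eventually_gt_atTop 0] with w hw
  have hq0 : 0 < w ^ ((1:ℝ)/4) := Real.rpow_pos_of_pos hw _
  have h4 : (w ^ ((1:ℝ)/4)) ^ 4 = w := by
    rw [← Real.rpow_natCast, ← Real.rpow_mul hw.le]; norm_num
  have h6 : w ^ ((3:ℝ)/2) = (w ^ ((1:ℝ)/4)) ^ 6 := by
    rw [← Real.rpow_natCast, ← Real.rpow_mul hw.le]; norm_num
  have hA := Ai_eq _ hq0
  rw [h4] at hA
  rw [hA, h6, Function.comp_apply, ← airyG_scale _ hq0]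
  generalize w ^ ((1:ℝ)/4) = q
  have hE : ((Real.exp (2 * q ^ 6 / 3) : ℝ) : ℂ) * ((Real.exp (-(2 * q ^ 6 / 3)) : ℝ) : ℂ) = 1 := by
    rw [← Complex.ofReal_mul, ← Real.exp_add]; simp
  have hs2 : ((Real.sqrt Real.pi : ℝ) : ℂ) * ((Real.sqrt Real.pi : ℝ) : ℂ) = (Real.pi : ℂ) := by
    rw [← Complex.ofReal_mul, Real.mul_self_sqrt Real.pi_pos.le]
  have hs0 : ((Real.sqrt Real.pi : ℝ) : ℂ) ≠ 0 := by
    rw [Ne, Complex.ofReal_eq_zero]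
    exact (Real.sqrt_pos.mpr Real.pi_pos).ne'
  have hc : (2 : ℂ) * ((Real.sqrt Real.pi : ℝ) : ℂ) * ((2 * Real.pi : ℝ) : ℂ)⁻¹
      = ((Real.sqrt Real.pi : ℝ) : ℂ)⁻¹ := by
    rw [Complex.ofReal_mul, ← hs2, Complex.ofReal_ofNat]
    field_simp
  rw [Complex.ofReal_mul, Complex.ofReal_mul, Complex.ofReal_mul, Complex.ofReal_ofNat, ← hc]
  generalize (∫ t, airyG (q ^ 2) t) = J
  linear_combination (-(2 : ℂ) * ((Real.sqrt Real.pi : ℝ) : ℂ) * ((2 * Real.pi : ℝ) : ℂ)⁻¹ * q * J) * hE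
end

section
/- For all real numbers a ≥ 0 and b, one has -Re((a+ib)^{3/2}) ≤ |b|^{3/2}/√2, where (a+ib)^{3/2} denotes the principal branch of the complex power. -/
/-- For all real `a ≥ 0` and `b`, `-Re((a+ib)^{3/2}) ≤ |b|^{3/2}/√2`,
where `(a+ib)^{3/2}` is the principal branch of the complex power. -/
theorem neg_re_cpow_le_of_nonneg (a b : ℝ) (ha : 0 ≤ a) :
    -((((a : ℂ) + (b : ℂ) * Complex.I) ^ ((3:ℂ)/2)).re) ≤ |b| ^ ((3:ℝ)/2) / Real.sqrt 2 := by
  set z : ℂ := (a : ℂ) + (b : ℂ) * Complex.I with hz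
  have h3 : z ^ ((3:ℂ)/2) = (z ^ (((1/2 : ℝ)) : ℂ)) ^ 3 := by
    rw [← Complex.cpow_nat_mul]
    congr 1
    push_cast
    ring
  have h2 : (z ^ (((1/2 : ℝ)) : ℂ)) ^ 2 = z := by
    rw [← Complex.cpow_nat_mul]
    have : ((2:ℕ):ℂ) * (((1/2 : ℝ)) : ℂ) = 1 := by push_cast; ring
    rw [this, Complex.cpow_one]
  have hp : 0 ≤ (z ^ (((1/2 : ℝ)) : ℂ)).re := by
    rw [Complex.cpow_ofReal_re]
    apply mul_nonneg (by positivity)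
    apply Real.cos_nonneg_of_mem_Icc
    constructor
    · linarith [Complex.neg_pi_lt_arg z]
    · linarith [Complex.arg_le_pi z]
  rw [h3]
  generalize z ^ (((1/2 : ℝ)) : ℂ) = w at *
  have hre : w.re ^ 2 - w.im ^ 2 = a := by
    have := congrArg Complex.re h2
    simp [pow_two, hz] at this
    linarith
  have him : 2 * w.re * w.im = b := by
    have := congrArg Complex.im h2
    simp [pow_two, hz] at this
    linarith
  have hw3 : (w ^ 3).re = w.re ^ 3 - 3 * w.re * w.im ^ 2 := by
    simp [pow_succ]
    ring
  rw [hw3]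
  generalize w.re = p at *
  generalize w.im = q at *
  have hb : |b| = 2 * (p * |q|) := by
    rw [← him, abs_mul, abs_mul, abs_of_nonneg hp]
    norm_num
    ring
  have hqp : |q| ≤ p := abs_le_of_sq_le_sq (by linarith) hp
  have hm : 0 ≤ p * |q| := by positivity
  have hs : |q| ≤ Real.sqrt (p * |q|) := by
    apply Real.le_sqrt_of_sq_le
    nlinarith [abs_nonneg q]
  have hR : |b| ^ ((3:ℝ)/2) / Real.sqrt 2 = 2 * (p * |q|) * Real.sqrt (p * |q|) := by
    have e : |b| ^ ((3:ℝ)/2) = |b| * Real.sqrt |b| := by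
      rw [show (3:ℝ)/2 = 1 + 1/2 by norm_num,
        Real.rpow_add_of_nonneg (abs_nonneg b) (by norm_num) (by norm_num),
        Real.rpow_one, Real.sqrt_eq_rpow]
    rw [e, hb, Real.sqrt_mul (by norm_num : (0:ℝ) ≤ 2)]
    have : Real.sqrt 2 ≠ 0 := by positivity
    field_simp
  rw [hR]
  have h4 := mul_le_mul_of_nonneg_left hs hm
  have h5 : p * |q| * |q| = p * q ^ 2 := by rw [mul_assoc, abs_mul_abs_self]; ring
  have h6 : 0 ≤ p * (p ^ 2 - q ^ 2) := mul_nonneg hp (by linarith)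
  nlinarith
end

section
/- For all real numbers a ≤ 0 and b, one has -Re((a+ib)^{3/2}) ≤ 2|b|^{3/2} + 2|b| · |a|^{1/2}, where (a+ib)^{3/2} denotes the principal branch of the complex power. -/
/-- For all real `a ≤ 0` and `b`, `-Re((a+ib)^{3/2}) ≤ 2|b|^{3/2} + 2|b|·|a|^{1/2}`,
where `(a+ib)^{3/2}` is the principal branch of the complex power. -/
theorem neg_re_cpow_le_of_nonpos (a b : ℝ) (ha : a ≤ 0) :
    -((((a : ℂ) + (b : ℂ) * Complex.I) ^ ((3:ℂ)/2)).re) ≤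
      2 * |b| ^ ((3:ℝ)/2) + 2 * |b| * |a| ^ ((1:ℝ)/2) := by
  set z : ℂ := (a : ℂ) + (b : ℂ) * Complex.I with hz
  have hw : ∃ w : ℂ, w ^ 2 = z ∧ z ^ ((3:ℂ)/2) = w ^ 3 := by
    refine ⟨z ^ ((1:ℂ)/2), ?_, ?_⟩
    · rw [← Complex.cpow_nat_mul]; norm_num
    · rw [← Complex.cpow_nat_mul]; norm_num
  obtain ⟨w, h1, h2⟩ := hw
  rw [h2]
  have hre : w.re ^ 2 - w.im ^ 2 = a := by
    have := congrArg Complex.re h1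
    simp [hz, pow_two] at this
    linarith
  have him : 2 * (w.re * w.im) = b := by
    have := congrArg Complex.im h1
    simp [hz, pow_two] at this
    linarith
  have h3 : (w ^ 3).re = w.re ^ 3 - 3 * w.re * w.im ^ 2 := by
    simp [pow_succ]; ring
  rw [h3]
  have hb : |b| ^ ((3:ℝ)/2) = |b| * √|b| := by
    rw [show (3:ℝ)/2 = 1 + 1/2 by norm_num, Real.rpow_add' (abs_nonneg b) (by norm_num),
      Real.rpow_one, Real.sqrt_eq_rpow]
  rw [hb, ← Real.sqrt_eq_rpow]
  set p := |w.re| with hp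
  set q := |w.im| with hq
  have hp0 : 0 ≤ p := abs_nonneg _
  have hq0 : 0 ≤ q := abs_nonneg _
  have hp2 : w.re ^ 2 = p ^ 2 := (sq_abs _).symm
  have hq2 : w.im ^ 2 = q ^ 2 := (sq_abs _).symm
  have hbb : |b| = 2 * (p * q) := by rw [← him, abs_mul, abs_mul]; simp [hp, hq]
  have haa : |a| = q ^ 2 - p ^ 2 := by rw [abs_of_nonpos ha]; linarith
  have hpq : p ≤ q := abs_le_of_sq_le_sq' (by linarith) hq0 |>.2
  have hs := Real.sqrt_nonneg |a|
  have hs2 := Real.sq_sqrt (abs_nonneg a)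
  have ht : p ≤ √|b| := by
    apply Real.le_sqrt_of_sq_le
    rw [hbb]; nlinarith
  have hqs : q ≤ √|a| + p := by
    apply abs_le_of_sq_le_sq' _ (by positivity) |>.2
    nlinarith [mul_nonneg hs hp0]
  have hqt : q ≤ √|a| + √|b| := by linarith
  have hmain : -(w.re ^ 3 - 3 * w.re * w.im ^ 2) ≤ p * (3 * q ^ 2) := by
    have e : -(w.re ^ 3 - 3 * w.re * w.im ^ 2) = w.re * (3 * q ^ 2 - p ^ 2) := by
      rw [← hp2, ← hq2]; ring
    rw [e]
    have : w.re ≤ p := le_abs_self _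
    have h5 : 0 ≤ 3 * q ^ 2 - p ^ 2 := by nlinarith
    nlinarith [mul_le_mul_of_nonneg_right this h5, mul_nonneg hp0 (sq_nonneg p)]
  have h6 : |b| * q ≤ |b| * (√|a| + √|b|) := mul_le_mul_of_nonneg_left hqt (abs_nonneg b)
  have h7 : p * (3 * q ^ 2) = 3 / 2 * (|b| * q) := by rw [hbb]; ring
  have h8 : 0 ≤ |b| * q := by positivity
  linarith
end

section
/- Let λ₀ < 0 and set κ = √(-λ₀). Let L > 0, let V : ℝ → ℝ be continuous with support contained in [-L, L], and let Φ : ℝ → ℝ be twice continuously differentiable with -Φ''(x) + V(x)Φ(x) = λ₀ Φ(x) for all x. Suppose there are real constants κ₋ and κ₊ with Φ(x) = κ₋ e^{κ x} for all x ≤ -L and Φ(x) = κ₊ e^{-κ x} for all x ≥ L. Then ∫_ℝ V(x) e^{-κ x} Φ(x) dx = -2 κ₋ κ = -2 κ₋ √(-λ₀). -/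
/-- Let `λ₀ < 0`, `κ = √(-λ₀)`, and let `Φ` be a bound state of `H = -d²/dx² + V`
with eigenvalue `λ₀`, equal to `κm e^{κx}` for `x ≤ -L` and `κp e^{-κx}` for `x ≥ L`.
Then `∫ V(x) e^{-κx} Φ(x) dx = -2 κm κ = -2 κm √(-λ₀)`. -/
theorem bound_state_integral (lam₀ : ℝ) (hlam₀ : lam₀ < 0) (L : ℝ) (hL : 0 < L)
    (V : ℝ → ℝ) (hV : Continuous V) (hsupp : Function.support V ⊆ Set.Icc (-L) L)
    (Φ : ℝ → ℝ) (hΦ : ContDiff ℝ 2 Φ)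
    (heq : ∀ x : ℝ, -(deriv (deriv Φ) x) + V x * Φ x = lam₀ * Φ x)
    (κm κp : ℝ)
    (hleft : ∀ x : ℝ, x ≤ -L → Φ x = κm * Real.exp (Real.sqrt (-lam₀) * x))
    (hright : ∀ x : ℝ, L ≤ x → Φ x = κp * Real.exp (-(Real.sqrt (-lam₀) * x))) :
    ∫ x : ℝ, V x * Real.exp (-(Real.sqrt (-lam₀) * x)) * Φ x
      = -2 * κm * Real.sqrt (-lam₀) := by
  obtain ⟨k, hk⟩ : ∃ k, k = Real.sqrt (-lam₀) := ⟨_, rfl⟩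
  have hk2 : k * k = -lam₀ := by
    rw [hk]; exact Real.mul_self_sqrt (by linarith)
  rw [← hk] at hleft hright ⊢
  have hd1 : ∀ x, HasDerivAt Φ (deriv Φ x) x := fun x =>
    (hΦ.differentiable (by norm_num) x).hasDerivAt
  have hc1 : ContDiff ℝ 1 (deriv Φ) := by
    have h2 : ContDiff ℝ (1 + 1) Φ := by
      rw [one_add_one_eq_two]; exact hΦ
    exact (contDiff_succ_iff_deriv.1 h2).2.2
  have hd2 : ∀ x, HasDerivAt (deriv Φ) (deriv (deriv Φ) x) x := fun x =>
    (hc1.differentiable (by norm_num) x).hasDerivAt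
  have hE : ∀ x : ℝ, HasDerivAt (fun x => Real.exp (-(k * x))) (Real.exp (-(k * x)) * (-k)) x := by
    intro x
    have := (((hasDerivAt_id x).const_mul k).neg).exp
    simpa using this
  have hE' : ∀ x : ℝ, HasDerivAt (fun x => Real.exp (k * x)) (Real.exp (k * x) * k) x := by
    intro x
    have := ((hasDerivAt_id x).const_mul k).exp
    simpa using this
  have hF : ∀ x, HasDerivAt (fun x => Real.exp (-(k * x)) * (deriv Φ x + k * Φ x))
      (V x * Real.exp (-(k * x)) * Φ x) x := by
    intro x
    refine ((hE x).mul ((hd2 x).add ((hd1 x).const_mul k))).congr_deriv ?_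
    have h := heq x
    have h' : deriv (deriv Φ) x = V x * Φ x + k * k * Φ x := by rw [hk2]; linarith
    simp only [Pi.add_apply]
    rw [h']; ring
  have hcont : Continuous (fun x => V x * Real.exp (-(k * x)) * Φ x) := by
    have := hΦ.continuous
    fun_prop
  have hs : Function.support (fun x => V x * Real.exp (-(k * x)) * Φ x)
      ⊆ Set.Ioc (-(L + 1)) (L + 1) := by
    intro x hx
    have hx' : V x ≠ 0 := by
      intro h0; apply hx; simp [h0]
    have := hsupp hx'
    exact ⟨by linarith [this.1], by linarith [this.2]⟩
  rw [← intervalIntegral.integral_eq_integral_of_support_subset hs,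
    intervalIntegral.integral_eq_sub_of_hasDerivAt (fun x _ => hF x)
      (hcont.intervalIntegrable _ _)]
  have hl : deriv Φ (-(L + 1)) = κm * (Real.exp (k * (-(L + 1))) * k) := by
    refine (((hE' _).const_mul κm).congr_of_eventuallyEq ?_).deriv
    filter_upwards [Iio_mem_nhds (show -(L + 1) < -L by linarith)] with x hx
    exact hleft x (le_of_lt hx)
  have hr : deriv Φ (L + 1) = κp * (Real.exp (-(k * (L + 1))) * (-k)) := by
    refine (((hE _).const_mul κp).congr_of_eventuallyEq ?_).deriv
    filter_upwards [Ioi_mem_nhds (show L < L + 1 by linarith)] with x hx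
    exact hright x (le_of_lt hx)
  rw [hl, hr, hleft _ (show -(L + 1) ≤ -L by linarith), hright _ (show L ≤ L + 1 by linarith)]
  have hexp : Real.exp (-(k * (-(L + 1)))) * Real.exp (k * (-(L + 1))) = 1 := by
    rw [← Real.exp_add]; simp
  linear_combination (-2 * κm * k) * hexp
end
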